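/- arXiv:1701.02167 — 2 statements merged into one kernel-verified Lean document; each statement's English description precedes it below -/
import Mathlib

section
/- Let T > 0 and let x : [0,T] → ℝ be càdlàg and continuous at T. Extend x to [−1, T] by setting x(s) := x(0) for s ∈ [−1, 0). For n ≥ 1 define x_n : [0,T] → ℝ by x_n(t) := n·∫_{t−1/n}^{t} x(s) ds. Then each x_n is continuous and x_n → x in the Skorokhod M1 topology on [0,T], i.e. d_{M1}(x_n, x) → 0 as n → ∞. In particular, every càdlàg function on [0,T] is an M1-limit of absolutely continuous functions. -/
open Filter Set MeasureTheory Topology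

noncomputable section

/-- A function `x : ℝ → ℝ` is càdlàg on `[0,T]`. -/
def Cadlag (T : ℝ) (x : ℝ → ℝ) : Prop :=
  (∀ t ∈ Set.Ico (0:ℝ) T, Filter.Tendsto x (nhdsWithin t (Set.Ici t)) (nhds (x t))) ∧
  (∀ t ∈ Set.Ioc (0:ℝ) T, ∃ L : ℝ, Filter.Tendsto x (nhdsWithin t (Set.Iio t)) (nhds L))

/-- The left limit `x(t−)`, with the convention `x(0−) := x(0)`. -/
def leftVal (x : ℝ → ℝ) (t : ℝ) : ℝ := if t ≤ 0 then x 0 else Function.leftLim x t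

/-- The completed graph `Γ(x)` of a càdlàg path on `[0,T]` (vertical segments at jumps). -/
def compGraph (T : ℝ) (x : ℝ → ℝ) : Set (ℝ × ℝ) :=
  {pt | pt.2 ∈ Set.Icc (0:ℝ) T ∧ ∃ c ∈ Set.Icc (0:ℝ) 1,
    pt.1 = c * leftVal x pt.2 + (1 - c) * x pt.2}

/-- The order on the completed graph: `(z₁,t₁) ≤ (z₂,t₂)` iff `t₁ < t₂`, or `t₁ = t₂`
and `|z₁ − x(t₁−)| ≤ |z₂ − x(t₁−)|`. -/
def graphLE (x : ℝ → ℝ) (p₁ p₂ : ℝ × ℝ) : Prop :=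
  p₁.2 < p₂.2 ∨ (p₁.2 = p₂.2 ∧ |p₁.1 - leftVal x p₁.2| ≤ |p₂.1 - leftVal x p₁.2|)

/-- `(u,r) : [0,1] → Γ(x)` is a parametric representation of `x`: continuous, onto the
completed graph, and nondecreasing for the order of the completed graph. -/
def ParamRep (T : ℝ) (x : ℝ → ℝ) (u r : ℝ → ℝ) : Prop :=
  ContinuousOn u (Set.Icc 0 1) ∧ ContinuousOn r (Set.Icc 0 1) ∧
  (∀ s ∈ Set.Icc (0:ℝ) 1, (u s, r s) ∈ compGraph T x) ∧
  (∀ pt ∈ compGraph T x, ∃ s ∈ Set.Icc (0:ℝ) 1, (u s, r s) = pt) ∧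
  (∀ s₁ ∈ Set.Icc (0:ℝ) 1, ∀ s₂ ∈ Set.Icc (0:ℝ) 1, s₁ ≤ s₂ →
    graphLE x (u s₁, r s₁) (u s₂, r s₂))

/-- The Skorokhod M1 distance on `D([0,T];ℝ)`. -/
def dM1 (T : ℝ) (x y : ℝ → ℝ) : ℝ :=
  sInf {d : ℝ | ∃ u r v ρ : ℝ → ℝ, ParamRep T x u r ∧ ParamRep T y v ρ ∧
    d = max (sSup ((fun s => |u s - v s|) '' Set.Icc (0:ℝ) 1))
            (sSup ((fun s => |r s - ρ s|) '' Set.Icc (0:ℝ) 1))}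

/-!
A càdlàg function `f` has only countably many jumps, so there is a clock `φ`, with `φ t - t`
nondecreasing, that jumps exactly where `f` does. The levels `σ` of `φ` parametrize the completed
graph of `f`, with time component the generalized inverse of `φ`, which is `1`-Lipschitz. The
trailing averages of `f` are parametrized in the same way by the levels of the averaged clock.

At a jump time `t`, let `κ` be the ratio of the jump of `f` to that of `φ`. Then `f - φ • κ` has a
limit at `t`, so its averages over short windows near `t` converge to that limit. As `σ` is the
average of `φ` over the window selected by the level `σ`, the average of `f` over that window moves
along the chord of the jump, in step with `σ`. This makes the convergence of the parametrizations
continuous in `σ`, hence uniform on compact sets of levels.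
-/

open Function (leftLim)

/-- The generalized inverse `σ ↦ inf {t | σ ≤ φ t}`, used for time changes `φ` such that
`t ↦ φ t - t` is monotone; for these the infimum is over a nonempty set bounded below. -/
def genInv (φ : ℝ → ℝ) (σ : ℝ) : ℝ := sInf {t | σ ≤ φ t}

section GeneralizedInverse

variable {φ ψ : ℝ → ℝ} {h r t σ : ℝ}

lemma strictMono_of_monotone_sub_id (hφ : Monotone fun t => φ t - t) : StrictMono φ := by
  intro s t hst
  linarith [hφ hst.le]

lemma nonempty_setOf_le (hφ : Monotone fun t => φ t - t) (σ : ℝ) : {t | σ ≤ φ t}.Nonempty := by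
  refine ⟨max 0 (σ - φ 0), show σ ≤ φ _ from ?_⟩
  linarith [hφ (le_max_left 0 (σ - φ 0)), le_max_right 0 (σ - φ 0)]

lemma bddBelow_setOf_le (hφ : Monotone fun t => φ t - t) (σ : ℝ) : BddBelow {t | σ ≤ φ t} := by
  refine ⟨min 0 (σ - φ 0), fun t (ht : σ ≤ φ t) => min_le_iff.2 ?_⟩
  rcases le_total 0 t with h0 | h0
  · exact Or.inl h0
  · exact Or.inr (by linarith [hφ h0])

lemma map_lt_of_lt_genInv (hφ : Monotone fun t => φ t - t) (ht : t < genInv φ σ) : φ t < σ :=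
  not_le.1 fun hc => (csInf_le (bddBelow_setOf_le hφ σ) hc).not_gt ht

lemma lt_map_of_genInv_lt (hφ : Monotone fun t => φ t - t) (ht : genInv φ σ < t) : σ < φ t := by
  obtain ⟨s, hs, hst⟩ := exists_lt_of_csInf_lt (nonempty_setOf_le hφ σ) ht
  exact lt_of_le_of_lt hs (strictMono_of_monotone_sub_id hφ hst)

lemma leftLim_genInv_le (hφ : Monotone fun t => φ t - t) (σ : ℝ) :
    leftLim φ (genInv φ σ) ≤ σ := by
  refine le_of_tendsto ((strictMono_of_monotone_sub_id hφ).monotone.tendsto_leftLim _) ?_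
  filter_upwards [self_mem_nhdsWithin] with t ht using (map_lt_of_lt_genInv hφ ht).le

lemma le_map_genInv (hφ : Monotone fun t => φ t - t)
    (hr : ContinuousWithinAt φ (Ioi (genInv φ σ)) (genInv φ σ)) : σ ≤ φ (genInv φ σ) := by
  refine ge_of_tendsto hr ?_
  filter_upwards [self_mem_nhdsWithin] with t ht using (lt_map_of_genInv_lt hφ ht).le

lemma genInv_eq_of_leftLim_le_of_le (hφ : Monotone fun t => φ t - t)
    (hl : leftLim φ r ≤ σ) (hr : σ ≤ φ r) : genInv φ σ = r := by
  refine le_antisymm (csInf_le (bddBelow_setOf_le hφ σ) hr) (not_lt.1 fun hlt => ?_)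
  obtain ⟨s, hs, hsr⟩ := exists_between hlt
  have := (strictMono_of_monotone_sub_id hφ).monotone.le_leftLim hsr
  linarith [lt_map_of_genInv_lt hφ hs]

lemma genInv_map (hφ : Monotone fun t => φ t - t) (t : ℝ) : genInv φ (φ t) = t :=
  genInv_eq_of_leftLim_le_of_le hφ
    ((strictMono_of_monotone_sub_id hφ).monotone.leftLim_le le_rfl) le_rfl

lemma map_genInv (hφ : Monotone fun t => φ t - t) (hc : Continuous φ) (σ : ℝ) :
    φ (genInv φ σ) = σ := by
  refine le_antisymm ?_ (le_map_genInv hφ hc.continuousWithinAt)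
  simpa only [hc.continuousWithinAt.leftLim_eq] using leftLim_genInv_le hφ σ

lemma monotone_genInv (hφ : Monotone fun t => φ t - t) : Monotone (genInv φ) := fun σ τ hστ =>
  csInf_le_csInf (bddBelow_setOf_le hφ σ) (nonempty_setOf_le hφ τ) fun _ ht => hστ.trans ht

lemma lipschitzWith_genInv (hφ : Monotone fun t => φ t - t) : LipschitzWith 1 (genInv φ) := by
  refine LipschitzWith.of_le_add fun σ τ => not_lt.1 fun hlt => ?_
  obtain ⟨s, hs, hsσ⟩ := exists_between (lt_sub_iff_add_lt.2 hlt)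
  have hτ := lt_map_of_genInv_lt hφ hs
  have hσ := map_lt_of_lt_genInv hφ (lt_sub_iff_add_lt.1 hsσ)
  have hd : σ - τ ≤ dist σ τ := le_abs_self _
  linarith [hφ (le_add_of_nonneg_right (dist_nonneg (x := σ) (y := τ)) : s ≤ s + dist σ τ)]

lemma abs_genInv_sub_genInv_le (hφ : Monotone fun t => φ t - t) (hψ : Monotone fun t => ψ t - t)
    (hlb : ∀ t, φ (t - h) ≤ ψ t) (hub : ∀ t, ψ t ≤ φ t) (σ : ℝ) :
    |genInv ψ σ - genInv φ σ| ≤ h := by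
  have hle : genInv φ σ ≤ genInv ψ σ :=
    csInf_le_csInf (bddBelow_setOf_le hφ σ) (nonempty_setOf_le hψ σ) fun t ht => ht.trans (hub t)
  rw [abs_of_nonneg (sub_nonneg.2 hle), sub_le_iff_le_add']
  refine not_lt.1 fun hlt => ?_
  obtain ⟨s, hs, hsψ⟩ := exists_between hlt
  have := lt_map_of_genInv_lt hφ (lt_sub_iff_add_lt.2 hs)
  linarith [hlb s, map_lt_of_lt_genInv hψ hsψ]

end GeneralizedInverse

/-- The mean of `f` over the trailing window `[t - h, t]`; for `h = 0` it is the junk value `0`. -/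
def trailingAverage {E : Type*} [NormedAddCommGroup E] [NormedSpace ℝ E]
    (h : ℝ) (f : ℝ → E) (t : ℝ) : E := h⁻¹ • ∫ s in (t - h)..t, f s

section TrailingAverage

lemma intervalIntegrable_of_locallyIntegrable {E : Type*} [NormedAddCommGroup E] {f : ℝ → E}
    (hf : LocallyIntegrable f) (a b : ℝ) : IntervalIntegrable f volume a b :=
  (hf.integrableOn_isCompact isCompact_uIcc).intervalIntegrable

variable {E : Type*} [NormedAddCommGroup E] [NormedSpace ℝ E] {f g : ℝ → E} {h : ℝ}

lemma trailingAverage_const [CompleteSpace E] (hh : h ≠ 0) (c : E) (t : ℝ) :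
    trailingAverage h (fun _ => c) t = c := by
  simp [trailingAverage, inv_smul_smul₀ hh]

lemma trailingAverage_sub (hf : LocallyIntegrable f) (hg : LocallyIntegrable g) (t : ℝ) :
    trailingAverage h (f - g) t = trailingAverage h f t - trailingAverage h g t := by
  have hf' := intervalIntegrable_of_locallyIntegrable hf (t - h) t
  have hg' := intervalIntegrable_of_locallyIntegrable hg (t - h) t
  simp only [trailingAverage, Pi.sub_apply, ← smul_sub, intervalIntegral.integral_sub hf' hg']

lemma trailingAverage_smul_const [CompleteSpace E] (φ : ℝ → ℝ) (c : E) (t : ℝ) :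
    trailingAverage h (fun s => φ s • c) t = trailingAverage h φ t • c := by
  simp only [trailingAverage, intervalIntegral.integral_smul_const, smul_assoc]

lemma trailingAverage_congr {T : ℝ} (hfg : EqOn f g (Iic T)) (hh : 0 ≤ h) :
    EqOn (trailingAverage h f) (trailingAverage h g) (Iic T) := by
  intro t ht
  refine congrArg (h⁻¹ • ·) (intervalIntegral.integral_congr fun s hs => hfg ?_)
  rw [uIcc_of_le (by linarith)] at hs
  exact hs.2.trans ht

lemma continuous_trailingAverage (hf : LocallyIntegrable f) (h : ℝ) :
    Continuous (trailingAverage h f) := by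
  have hint := intervalIntegrable_of_locallyIntegrable hf
  have hF : Continuous fun t => ∫ s in (0 : ℝ)..t, f s :=
    intervalIntegral.continuous_primitive hint 0
  refine Continuous.const_smul ?_ h⁻¹
  simpa only [Pi.sub_def, Function.comp_def,
    intervalIntegral.integral_interval_sub_left (hint _ _) (hint _ _)]
    using hF.sub (hF.comp (continuous_sub_right h))

lemma tendsto_trailingAverage [CompleteSpace E] {ι : Type*} {l : Filter ι} {r : ℝ} {c : E}
    {h t : ι → ℝ} (hf : LocallyIntegrable f) (hc : Tendsto f (𝓝 r) (𝓝 c))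
    (hh : Tendsto h l (𝓝[≠] 0)) (ht : Tendsto t l (𝓝 r)) :
    Tendsto (fun i => trailingAverage (h i) f (t i)) l (𝓝 c) := by
  have hstart : Tendsto (fun i => t i - h i) l (𝓝 r) := by
    simpa using ht.sub (tendsto_nhds_of_tendsto_nhdsWithin hh)
  have hmeas : StronglyMeasurableAtFilter f (𝓝 r) :=
    hf.aestronglyMeasurable.stronglyMeasurableAtFilter
  have ho := intervalIntegral.integral_sub_linear_isLittleO_of_tendsto_ae hmeas
    (hc.mono_left inf_le_left) hstart ht
  have := (ho.tendsto_inv_smul_nhds_zero).add_const c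
  rw [zero_add] at this
  refine this.congr' ?_
  filter_upwards [hh.eventually self_mem_nhdsWithin] with i hi
  have hi : h i ≠ 0 := hi
  simp [trailingAverage, smul_sub, inv_smul_smul₀ hi]

end TrailingAverage

section MonotoneTrailingAverage

variable {f : ℝ → ℝ} {h : ℝ}

lemma monotone_trailingAverage (hf : Monotone f) (hh : 0 ≤ h) :
    Monotone (trailingAverage h f) := by
  have shift (t : ℝ) : ∫ s in (t - h)..t, f s = ∫ s in -h..0, f (t + s) := by
    rw [intervalIntegral.integral_comp_add_left, add_zero, ← sub_eq_add_neg]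
  have integrable (t : ℝ) : IntervalIntegrable (fun s => f (t + s)) volume (-h) 0 :=
    (hf.comp fun _ _ hs => add_le_add_right hs t).intervalIntegrable
  intro s t hst
  simp only [trailingAverage, shift, smul_eq_mul]
  gcongr
  exact intervalIntegral.integral_mono (by linarith) (integrable s) (integrable t)
    fun u => hf (by gcongr)

lemma trailingAverage_le (hf : Monotone f) (hh : 0 < h) (t : ℝ) :
    trailingAverage h f t ≤ f t := by
  conv_rhs => rw [← trailingAverage_const hh.ne' (f t) t]
  simp only [trailingAverage, smul_eq_mul]
  gcongr
  exact intervalIntegral.integral_mono_on (by linarith) hf.intervalIntegrable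
    intervalIntegrable_const fun _ hs => hf hs.2

lemma le_trailingAverage (hf : Monotone f) (hh : 0 < h) (t : ℝ) :
    f (t - h) ≤ trailingAverage h f t := by
  rw [← trailingAverage_const hh.ne' (f (t - h)) t]
  simp only [trailingAverage, smul_eq_mul]
  gcongr
  exact intervalIntegral.integral_mono_on (by linarith) intervalIntegrable_const
    hf.intervalIntegrable fun _ hs => hf hs.1

lemma trailingAverage_id (hh : h ≠ 0) (t : ℝ) : trailingAverage h id t = t - h / 2 := by
  simp only [trailingAverage, id_eq, integral_id, smul_eq_mul]
  field_simp
  ring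

lemma monotone_trailingAverage_sub_id {φ : ℝ → ℝ} (hφ : Monotone fun t => φ t - t) (hh : 0 < h) :
    Monotone fun t => trailingAverage h φ t - t := by
  have hint : LocallyIntegrable φ := (strictMono_of_monotone_sub_id hφ).monotone.locallyIntegrable
  have heq (t : ℝ) : trailingAverage h φ t - t = trailingAverage h (φ - id) t - h / 2 := by
    rw [trailingAverage_sub hint monotone_id.locallyIntegrable, trailingAverage_id hh.ne']
    ring
  have havg : Monotone (trailingAverage h (φ - id)) := monotone_trailingAverage hφ hh.le
  simpa only [heq, sub_eq_add_neg] using havg.add_const (-(h / 2))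

end MonotoneTrailingAverage

/-- Càdlàg functions on the whole line `ℝ`, so that windows reaching outside `[0, T]` need no
special treatment. -/
structure IsGlobalCadlag {E : Type*} [TopologicalSpace E] (f : ℝ → E) : Prop where
  continuousWithinAt_Ici : ∀ t, ContinuousWithinAt f (Ici t) t
  exists_tendsto_left : ∀ t, ∃ c, Tendsto f (𝓝[<] t) (𝓝 c)

section Jumps

lemma countable_setOf_leftLim_lt_lt {f : ℝ → ℝ} (hf : ∀ t, ∃ c, Tendsto f (𝓝[<] t) (𝓝 c))
    (q : ℝ) : {t | leftLim f t < q ∧ q < f t}.Countable := by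
  refine (countable_setOfPred_isolated_left_within (s := {t | q ≤ f t})).mono fun t ht => ?_
  refine ⟨ht.2.le, ?_⟩
  rw [inter_comm, nhdsWithin_inter', inf_principal_eq_bot]
  filter_upwards [(tendsto_leftLim_of_tendsto (hf t)).eventually (gt_mem_nhds ht.1)] with s hs
  exact not_le.2 hs

lemma countable_setOf_leftLim_lt {f : ℝ → ℝ} (hf : ∀ t, ∃ c, Tendsto f (𝓝[<] t) (𝓝 c)) :
    {t | leftLim f t < f t}.Countable := by
  refine (countable_iUnion fun q : ℚ => countable_setOf_leftLim_lt_lt hf q).mono fun t ht => ?_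
  obtain ⟨q, hq⟩ := exists_rat_btwn (show leftLim f t < f t from ht)
  exact mem_iUnion.2 ⟨q, hq⟩

lemma leftLim_neg {f : ℝ → ℝ} {t : ℝ} (hf : ∃ c, Tendsto f (𝓝[<] t) (𝓝 c)) :
    leftLim (-f) t = -leftLim f t :=
  leftLim_eq_of_tendsto (tendsto_leftLim_of_tendsto hf).neg

lemma countable_setOf_leftLim_ne {f : ℝ → ℝ} (hf : ∀ t, ∃ c, Tendsto f (𝓝[<] t) (𝓝 c)) :
    {t | leftLim f t ≠ f t}.Countable := by
  have hneg := countable_setOf_leftLim_lt (f := -f) fun t => (hf t).imp' Neg.neg fun _ hc => hc.neg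
  refine ((countable_setOf_leftLim_lt hf).union hneg).mono fun t ht => ?_
  refine (lt_or_gt_of_ne ht).imp_right fun hlt => ?_
  simpa [leftLim_neg (hf t)] using hlt

end Jumps

namespace IsGlobalCadlag

section Topology

variable {E : Type*} [TopologicalSpace E] {f : ℝ → E} {t : ℝ}

lemma tendsto_leftLim (hf : IsGlobalCadlag f) (t : ℝ) :
    Tendsto f (𝓝[<] t) (𝓝 (leftLim f t)) :=
  tendsto_leftLim_of_tendsto (hf.exists_tendsto_left t)

lemma continuousAt (hf : IsGlobalCadlag f) (ht : leftLim f t = f t) :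
    ContinuousAt f t := by
  rw [ContinuousAt, ← nhdsLT_sup_nhdsGE]
  exact (ht ▸ hf.tendsto_leftLim t).sup (hf.continuousWithinAt_Ici t)

end Topology

lemma measurable {f : ℝ → ℝ} (hf : IsGlobalCadlag f) : Measurable f :=
  measurable_of_countable_not_continuousAt <|
    (countable_setOf_leftLim_ne hf.exists_tendsto_left).mono fun _ ht hlim =>
      ht (hf.continuousAt hlim)

lemma locallyIntegrable {f : ℝ → ℝ} (hf : IsGlobalCadlag f) : LocallyIntegrable f := by
  have hmeas {s : Set ℝ} {t : ℝ} : StronglyMeasurableAtFilter f (𝓝[s] t) :=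
    hf.measurable.stronglyMeasurable.aestronglyMeasurable.stronglyMeasurableAtFilter
  intro t
  rw [← nhdsLT_sup_nhdsGE, IntegrableAtFilter.sup_iff]
  exact ⟨(Measure.finiteAt_nhdsWithin volume t _).integrableAtFilter_of_tendsto hmeas
      (hf.tendsto_leftLim t),
    (Measure.finiteAt_nhdsWithin volume t _).integrableAtFilter_of_tendsto hmeas
      (hf.continuousWithinAt_Ici t)⟩

end IsGlobalCadlag

lemma exists_stieltjesFunction_leftLim_eq_iff {D : Set ℝ} (hD : D.Countable) :
    ∃ J : StieltjesFunction ℝ, ∀ t, leftLim J t = J t ↔ t ∉ D := by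
  have := hD.to_subtype
  -- Adding the atomless `volume` makes the measure nonzero even when `D` is empty.
  let ν : Measure ℝ := (Measure.sum fun d : D => Measure.dirac (d : ℝ)) + volume
  have : NeZero ν := ⟨fun h0 => by simpa [ν] using congrArg (· univ) h0⟩
  refine ⟨ProbabilityTheory.cdf ν.toFinite, fun t => ?_⟩
  have hle := (ProbabilityTheory.cdf ν.toFinite).mono.leftLim_le (le_refl t)
  calc
    _ ↔ (ProbabilityTheory.cdf ν.toFinite).measure {t} = 0 := by
      rw [StieltjesFunction.measure_singleton, ENNReal.ofReal_eq_zero, sub_nonpos]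
      exact ⟨ge_of_eq, hle.antisymm⟩
    _ ↔ ν {t} = 0 := by rw [ProbabilityTheory.measure_cdf, toFinite_apply_eq_zero_iff]
    _ ↔ t ∉ D := by
      simp only [ν, Measure.add_apply, Measure.sum_apply _ (measurableSet_singleton t),
        Measure.dirac_apply, Real.volume_singleton, add_zero, ENNReal.tsum_eq_zero,
        indicator_apply_eq_zero, mem_singleton_iff, Pi.one_apply, one_ne_zero, imp_false,
        Subtype.forall]
      exact ⟨fun h ht => h t ht rfl, fun h d hd hdt => h (hdt ▸ hd)⟩

/-- A strictly increasing time change `φ` with the same jump times as `f`: running along its graph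
leaves room, at each jump of `f`, to traverse the vertical segment of the completed graph. -/
structure IsJumpClock {E : Type*} [TopologicalSpace E] (f : ℝ → E) (φ : ℝ → ℝ) : Prop where
  monotone_sub_id : Monotone fun t => φ t - t
  isGlobalCadlag : IsGlobalCadlag φ
  leftLim_eq_iff : ∀ t, leftLim φ t = φ t ↔ leftLim f t = f t

namespace IsJumpClock

variable {E : Type*} [TopologicalSpace E] {f : ℝ → E} {φ : ℝ → ℝ}

lemma monotone (hφ : IsJumpClock f φ) : Monotone φ :=
  (strictMono_of_monotone_sub_id hφ.monotone_sub_id).monotone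

lemma le_map_genInv (hφ : IsJumpClock f φ) (σ : ℝ) : σ ≤ φ (genInv φ σ) :=
  _root_.le_map_genInv hφ.monotone_sub_id
    ((hφ.isGlobalCadlag.continuousWithinAt_Ici _).mono Ioi_subset_Ici_self)

end IsJumpClock

lemma IsGlobalCadlag.exists_isJumpClock {f : ℝ → ℝ} (hf : IsGlobalCadlag f) :
    ∃ φ, IsJumpClock f φ := by
  obtain ⟨J, hJ⟩ := exists_stieltjesFunction_leftLim_eq_iff
    (countable_setOf_leftLim_ne hf.exists_tendsto_left)
  have hleft (t : ℝ) : Tendsto (fun s => s + J s) (𝓝[<] t) (𝓝 (t + leftLim J t)) :=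
    (tendsto_id.mono_left inf_le_left).add (J.mono.tendsto_leftLim t)
  refine ⟨fun t => t + J t, ?_, ⟨fun t => ?_, fun t => ⟨_, hleft t⟩⟩, fun t => ?_⟩
  · simpa only [add_sub_cancel_left] using J.mono
  · exact continuousWithinAt_id.add (J.right_continuous t)
  · rw [leftLim_eq_of_tendsto (hleft t), add_right_inj, hJ, mem_ofPred_eq, not_not]

lemma isGlobalCadlag_of_continuous {E : Type*} [TopologicalSpace E] {f : ℝ → E}
    (hf : Continuous f) : IsGlobalCadlag f :=
  ⟨fun _ => hf.continuousWithinAt, fun t => ⟨f t, hf.continuousWithinAt⟩⟩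

lemma isJumpClock_of_continuous {E : Type*} [TopologicalSpace E] [T2Space E] {f : ℝ → E}
    {φ : ℝ → ℝ} (hφ : Monotone fun t => φ t - t) (hcφ : Continuous φ) (hcf : Continuous f) :
    IsJumpClock f φ :=
  ⟨hφ, isGlobalCadlag_of_continuous hcφ, fun _ => by
    rw [hcφ.continuousWithinAt.leftLim_eq, hcf.continuousWithinAt.leftLim_eq]; simp⟩

section LineMap

variable {a b θ : ℝ}

lemma lineMap_image_Icc (hab : a ≤ b) : AffineMap.lineMap a b '' Icc (0 : ℝ) 1 = Icc a b := by
  rw [← segment_eq_image_lineMap, segment_eq_Icc hab]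

lemma lineMap_mem_Icc (hab : a ≤ b) (hθ : θ ∈ Icc (0 : ℝ) 1) :
    AffineMap.lineMap a b θ ∈ Icc a b :=
  lineMap_image_Icc hab ▸ mem_image_of_mem _ hθ

end LineMap

/-- The fraction of the jump of `φ` at time `genInv φ σ` that the level `σ` has completed. At a
continuity point of `φ` it is the junk value `0 / 0 = 0`. -/
def jumpFraction (φ : ℝ → ℝ) (σ : ℝ) : ℝ :=
  (σ - leftLim φ (genInv φ σ)) /
    (φ (genInv φ σ) - leftLim φ (genInv φ σ))

section JumpFraction

variable {φ : ℝ → ℝ} {t θ σ τ : ℝ}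

lemma IsJumpClock.jumpFraction_mem_Icc {E : Type*} [TopologicalSpace E] {f : ℝ → E}
    (hφ : IsJumpClock f φ) (σ : ℝ) : jumpFraction φ σ ∈ Icc 0 1 := by
  have hl := leftLim_genInv_le hφ.monotone_sub_id σ
  have hr := hφ.le_map_genInv σ
  exact ⟨div_nonneg (by linarith) (by linarith), div_le_one_of_le₀ (by linarith) (by linarith)⟩

lemma jumpFraction_le_jumpFraction (hφ : Monotone φ) (hστ : σ ≤ τ)
    (heq : genInv φ σ = genInv φ τ) : jumpFraction φ σ ≤ jumpFraction φ τ := by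
  have hjump := sub_nonneg.2 (hφ.leftLim_le (le_refl (genInv φ τ)))
  simp only [jumpFraction, heq]
  gcongr

lemma genInv_lineMap (hφ : Monotone fun t => φ t - t) (hθ : θ ∈ Icc (0 : ℝ) 1) :
    genInv φ (AffineMap.lineMap (leftLim φ t) (φ t) θ) = t := by
  obtain ⟨hl, hr⟩ :=
    lineMap_mem_Icc ((strictMono_of_monotone_sub_id hφ).monotone.leftLim_le (le_refl t)) hθ
  exact genInv_eq_of_leftLim_le_of_le hφ hl hr

end JumpFraction

section LiftedPath

variable {E : Type*} [NormedAddCommGroup E] [NormedSpace ℝ E] {f : ℝ → E} {φ : ℝ → ℝ} {t θ : ℝ}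

/-- The space component of the parametric representation of `f` by the levels `σ` of `φ`: at each
jump of `φ` it runs linearly along the jump of `f`. -/
def liftedPath (f : ℝ → E) (φ : ℝ → ℝ) (σ : ℝ) : E :=
  AffineMap.lineMap (leftLim f (genInv φ σ)) (f (genInv φ σ)) (jumpFraction φ σ)

lemma IsJumpClock.liftedPath_lineMap (hφ : IsJumpClock f φ) (hθ : θ ∈ Icc (0 : ℝ) 1) :
    liftedPath f φ (AffineMap.lineMap (leftLim φ t) (φ t) θ) =
      AffineMap.lineMap (leftLim f t) (f t) θ := by
  rw [liftedPath, jumpFraction, genInv_lineMap hφ.monotone_sub_id hθ]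
  by_cases hjump : leftLim φ t = φ t
  · simp [(hφ.leftLim_eq_iff t).1 hjump]
  · rw [AffineMap.lineMap_apply_ring', add_sub_cancel_right,
      mul_div_cancel_right₀ _ (sub_ne_zero.2 (Ne.symm hjump))]

lemma liftedPath_of_continuous (hf : Continuous f) (φ : ℝ → ℝ) (σ : ℝ) :
    liftedPath f φ σ = f (genInv φ σ) := by
  rw [liftedPath, hf.continuousWithinAt.leftLim_eq, AffineMap.lineMap_same_apply]

end LiftedPath

lemma leftVal_of_nonneg {f : ℝ → ℝ} {t : ℝ} (h0 : leftLim f 0 = f 0) (ht : 0 ≤ t) :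
    leftVal f t = leftLim f t := by
  rcases ht.eq_or_lt with rfl | ht
  · simp [leftVal, h0]
  · simp [leftVal, ht.not_ge]

lemma mem_compGraph_iff {f : ℝ → ℝ} {T : ℝ} (h0 : leftLim f 0 = f 0) {p : ℝ × ℝ} :
    p ∈ compGraph T f ↔ p.2 ∈ Icc 0 T ∧
      ∃ θ ∈ Icc (0 : ℝ) 1, AffineMap.lineMap (leftLim f p.2) (f p.2) θ = p.1 := by
  refine and_congr_right fun ht => ?_
  rw [leftVal_of_nonneg h0 ht.1]
  constructor <;> rintro ⟨c, hc, h⟩ <;>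
    refine ⟨1 - c, Icc.mem_iff_one_sub_mem.1 hc, ?_⟩
  · rw [h, AffineMap.lineMap_apply_ring]
    ring
  · rw [← h, AffineMap.lineMap_apply_ring]
    ring

section ParametricRepresentation

variable {f φ : ℝ → ℝ} {T : ℝ}

namespace IsJumpClock

lemma mem_compGraph (hφ : IsJumpClock f φ) (h0 : leftLim f 0 = f 0) {σ : ℝ}
    (hσ : σ ∈ Icc (φ 0) (φ T)) : (liftedPath f φ σ, genInv φ σ) ∈ compGraph T f := by
  have hmono := monotone_genInv hφ.monotone_sub_id
  refine (mem_compGraph_iff h0).2 ⟨⟨?_, ?_⟩, _, hφ.jumpFraction_mem_Icc σ, rfl⟩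
  · simpa only [genInv_map hφ.monotone_sub_id] using hmono hσ.1
  · simpa only [genInv_map hφ.monotone_sub_id] using hmono hσ.2

lemma exists_of_mem_compGraph (hφ : IsJumpClock f φ) (h0 : leftLim f 0 = f 0) {p : ℝ × ℝ}
    (hp : p ∈ compGraph T f) : ∃ σ ∈ Icc (φ 0) (φ T), (liftedPath f φ σ, genInv φ σ) = p := by
  obtain ⟨ht, θ, hθ, hz⟩ := (mem_compGraph_iff h0).1 hp
  obtain ⟨hl, hr⟩ := lineMap_mem_Icc (hφ.monotone.leftLim_le (le_refl p.2)) hθ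
  refine ⟨AffineMap.lineMap (leftLim φ p.2) (φ p.2) θ, ⟨?_, ?_⟩,
    Prod.ext ((hφ.liftedPath_lineMap hθ).trans hz) (genInv_lineMap hφ.monotone_sub_id hθ)⟩
  · calc
      φ 0 = leftLim φ 0 := ((hφ.leftLim_eq_iff 0).2 h0).symm
      _ ≤ leftLim φ p.2 := hφ.monotone.leftLim ht.1
      _ ≤ _ := hl
  · exact hr.trans (hφ.monotone ht.2)

lemma graphLE_of_le (hφ : IsJumpClock f φ) (h0 : leftLim f 0 = f 0) {σ τ : ℝ}
    (hσ : φ 0 ≤ σ) (hστ : σ ≤ τ) :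
    graphLE f (liftedPath f φ σ, genInv φ σ) (liftedPath f φ τ, genInv φ τ) := by
  refine (monotone_genInv hφ.monotone_sub_id hστ).lt_or_eq.imp_right
    fun (heq : genInv φ σ = genInv φ τ) => ⟨heq, ?_⟩
  have hr : 0 ≤ genInv φ τ := by
    simpa only [genInv_map hφ.monotone_sub_id] using
      monotone_genInv hφ.monotone_sub_id (hσ.trans hστ)
  have hfrac := jumpFraction_le_jumpFraction hφ.monotone hστ heq
  have hpos := (hφ.jumpFraction_mem_Icc σ).1
  rw [heq, leftVal_of_nonneg h0 hr, liftedPath, liftedPath, heq, AffineMap.lineMap_apply_ring',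
    AffineMap.lineMap_apply_ring', add_sub_cancel_right, add_sub_cancel_right, abs_mul, abs_mul]
  gcongr

lemma paramRep (hφ : IsJumpClock f φ) (h0 : leftLim f 0 = f 0) (hT : 0 ≤ T)
    (hc : Continuous (liftedPath f φ)) :
    ParamRep T f (liftedPath f φ ∘ AffineMap.lineMap (φ 0) (φ T))
      (genInv φ ∘ AffineMap.lineMap (φ 0) (φ T)) := by
  have hle : φ 0 ≤ φ T := hφ.monotone hT
  have hline : Continuous (AffineMap.lineMap (φ 0) (φ T) : ℝ → ℝ) := AffineMap.lineMap_continuous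
  refine ⟨(hc.comp hline).continuousOn,
    ((lipschitzWith_genInv hφ.monotone_sub_id).continuous.comp hline).continuousOn,
    fun s hs => hφ.mem_compGraph h0 (lineMap_mem_Icc hle hs), fun p hp => ?_,
    fun s hs s' _ hss' => ?_⟩
  · obtain ⟨σ, hσ, hp⟩ := hφ.exists_of_mem_compGraph h0 hp
    obtain ⟨s, hs, rfl⟩ := (lineMap_image_Icc hle).symm ▸ hσ
    exact ⟨s, hs, hp⟩
  · exact hφ.graphLE_of_le h0 (lineMap_mem_Icc hle hs).1
      (AffineMap.lineMap_mono hle hss')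

end IsJumpClock

end ParametricRepresentation

section Convergence

variable {E : Type*} [NormedAddCommGroup E] [NormedSpace ℝ E] {f : ℝ → E} {φ : ℝ → ℝ}

lemma tendsto_genInv_trailingAverage (hφ : Monotone fun t => φ t - t) (σ : ℝ) :
    Tendsto (fun p : ℝ × ℝ => genInv (trailingAverage p.1 φ) p.2) (𝓝[>] 0 ×ˢ 𝓝 σ)
      (𝓝 (genInv φ σ)) := by
  have hfix : Tendsto (fun p : ℝ × ℝ => genInv φ p.2) (𝓝[>] 0 ×ˢ 𝓝 σ) (𝓝 (genInv φ σ)) :=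
    ((lipschitzWith_genInv hφ).continuous.tendsto σ).comp tendsto_snd
  have hwidth : Tendsto Prod.fst (𝓝[>] (0 : ℝ) ×ˢ 𝓝 σ) (𝓝 0) :=
    tendsto_nhds_of_tendsto_nhdsWithin tendsto_fst
  have hdiff : Tendsto (fun p : ℝ × ℝ => genInv (trailingAverage p.1 φ) p.2 - genInv φ p.2)
      (𝓝[>] 0 ×ˢ 𝓝 σ) (𝓝 0) := by
    refine squeeze_zero_norm' ?_ hwidth
    filter_upwards [tendsto_fst.eventually self_mem_nhdsWithin] with p (hp : 0 < p.1)
    have hmono := (strictMono_of_monotone_sub_id hφ).monotone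
    exact abs_genInv_sub_genInv_le hφ (monotone_trailingAverage_sub_id hφ hp)
      (le_trailingAverage hmono hp) (trailingAverage_le hmono hp) p.2
  simpa only [sub_add_cancel, zero_add] using hdiff.add hfix

/-- The ratio of the jump of `f` to that of `φ` at time `t`, with value `0` where `φ` does not
jump. -/
def jumpSlope (f : ℝ → E) (φ : ℝ → ℝ) (t : ℝ) : E := (φ t - leftLim φ t)⁻¹ • (f t - leftLim f t)

lemma IsJumpClock.smul_jumpSlope (hφ : IsJumpClock f φ) (t : ℝ) :
    (φ t - leftLim φ t) • jumpSlope f φ t = f t - leftLim f t := by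
  by_cases hjump : leftLim φ t = φ t
  · simp [hjump, (hφ.leftLim_eq_iff t).1 hjump]
  · exact smul_inv_smul₀ (sub_ne_zero.2 (Ne.symm hjump)) _

lemma liftedPath_eq (f : ℝ → E) (φ : ℝ → ℝ) (σ : ℝ) :
    liftedPath f φ σ = leftLim f (genInv φ σ) +
      (σ - leftLim φ (genInv φ σ)) • jumpSlope f φ (genInv φ σ) := by
  rw [liftedPath, AffineMap.lineMap_apply_module', jumpSlope, jumpFraction, smul_smul,
    ← div_eq_mul_inv, add_comm]

lemma IsJumpClock.tendsto_sub_smul_jumpSlope (hφ : IsJumpClock f φ) (hf : IsGlobalCadlag f)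
    (t : ℝ) :
    Tendsto (fun s => f s - φ s • jumpSlope f φ t) (𝓝 t)
      (𝓝 (leftLim f t - leftLim φ t • jumpSlope f φ t)) := by
  have hvalue : f t - φ t • jumpSlope f φ t = leftLim f t - leftLim φ t • jumpSlope f φ t := by
    rw [← sub_eq_zero, sub_sub_sub_comm, ← sub_smul, hφ.smul_jumpSlope, sub_self]
  rw [← nhdsLT_sup_nhdsGE]
  refine ((hf.tendsto_leftLim t).sub
    ((hφ.isGlobalCadlag.tendsto_leftLim t).smul_const _)).sup (hvalue ▸ ?_)
  exact (hf.continuousWithinAt_Ici t).sub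
    ((hφ.isGlobalCadlag.continuousWithinAt_Ici t).smul_const _)

lemma IsJumpClock.tendsto_trailingAverage_genInv [CompleteSpace E] (hφ : IsJumpClock f φ)
    (hf : IsGlobalCadlag f) (hint : LocallyIntegrable f) (σ : ℝ) :
    Tendsto
      (fun p : ℝ × ℝ => trailingAverage p.1 f (genInv (trailingAverage p.1 φ) p.2))
      (𝓝[>] 0 ×ˢ 𝓝 σ) (𝓝 (liftedPath f φ σ)) := by
  set κ := jumpSlope f φ (genInv φ σ)
  have hφint : LocallyIntegrable φ := hφ.monotone.locallyIntegrable
  have hφκint : LocallyIntegrable fun s => φ s • κ := fun t =>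
    (hφint t).imp fun _ hs => ⟨hs.1, hs.2.smul_const κ⟩
  have hlim := tendsto_trailingAverage (hint.sub hφκint)
    (hφ.tendsto_sub_smul_jumpSlope hf (genInv φ σ))
    (tendsto_fst.mono_right (nhdsGT_le_nhdsNE 0))
    (tendsto_genInv_trailingAverage hφ.monotone_sub_id σ)
  have hlim' := hlim.add (tendsto_snd.smul_const κ)
  rw [liftedPath_eq, sub_smul, add_sub, ← sub_add_eq_add_sub]
  refine hlim'.congr' ?_
  filter_upwards [tendsto_fst.eventually self_mem_nhdsWithin] with p (hp : 0 < p.1)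
  have hlevel : trailingAverage p.1 φ (genInv (trailingAverage p.1 φ) p.2) = p.2 :=
    map_genInv (monotone_trailingAverage_sub_id hφ.monotone_sub_id hp)
      (continuous_trailingAverage hφint p.1) p.2
  rw [trailingAverage_sub hint hφκint, trailingAverage_smul_const, hlevel, sub_add_cancel]

end Convergence

section ContinuousConvergence

variable {ι X Y : Type*} [TopologicalSpace X] {p : Filter ι} {F : ι → X → Y} {u : X → Y}

lemma continuous_of_tendsto_prod [TopologicalSpace Y] [RegularSpace Y] [NeBot p]
    (h : ∀ a, Tendsto (fun q : ι × X => F q.1 q.2) (p ×ˢ 𝓝 a) (𝓝 (u a))) : Continuous u := by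
  refine continuous_iff_continuousAt.2 fun a =>
    (closed_nhds_basis (u a)).tendsto_right_iff.2 fun C hC => ?_
  obtain ⟨P, hP, Q, hQ, hPQ⟩ := eventually_prod_iff.1 ((h a).eventually hC.1)
  filter_upwards [hQ.eventually_nhds] with b hb
  exact hC.2.mem_of_tendsto (h b) ((hP.prod_mk hb).mono fun q hq => hPQ hq.1 hq.2)

lemma tendstoUniformlyOn_of_tendsto_prod [UniformSpace Y] [NeBot p] {K : Set X} (hK : IsCompact K)
    (h : ∀ a, Tendsto (fun q : ι × X => F q.1 q.2) (p ×ˢ 𝓝 a) (𝓝 (u a))) :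
    TendstoUniformlyOn F u p K := by
  refine (tendstoLocallyUniformlyOn_iff_tendstoUniformlyOn_of_compact hK).1 <|
    tendstoLocallyUniformlyOn_iff_forall_tendsto.2 fun a _ => ?_
  have hu : Tendsto (fun q : ι × X => u q.2) (p ×ˢ 𝓝 a) (𝓝 (u a)) :=
    ((continuous_of_tendsto_prod h).tendsto a).comp tendsto_snd
  exact ((hu.prodMk_nhds (h a)).mono_right (nhds_le_uniformity _)).mono_left
    (prod_mono_right p nhdsWithin_le_nhds)

end ContinuousConvergence

section SkorokhodM1

variable {T ε : ℝ} {x x' y y' u r v ρ : ℝ → ℝ}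

lemma max_sSup_abs_sub_nonneg (u r v ρ : ℝ → ℝ) (s : Set ℝ) :
    0 ≤ max (sSup ((fun t => |u t - v t|) '' s)) (sSup ((fun t => |r t - ρ t|) '' s)) :=
  le_max_of_le_left (Real.sSup_nonneg (forall_mem_image.2 fun _ _ => abs_nonneg _))

lemma dM1_nonneg (T : ℝ) (x y : ℝ → ℝ) : 0 ≤ dM1 T x y := by
  refine Real.sInf_nonneg ?_
  rintro _ ⟨u, r, v, ρ, -, -, rfl⟩
  exact max_sSup_abs_sub_nonneg u r v ρ _

lemma ParamRep.dM1_le (hx : ParamRep T x u r) (hy : ParamRep T y v ρ)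
    (hu : ∀ s ∈ Icc (0 : ℝ) 1, |u s - v s| ≤ ε) (hr : ∀ s ∈ Icc (0 : ℝ) 1, |r s - ρ s| ≤ ε) :
    dM1 T x y ≤ ε := by
  have hne : (Icc (0 : ℝ) 1).Nonempty := nonempty_Icc.2 zero_le_one
  refine csInf_le_of_le ⟨0, ?_⟩ ⟨u, r, v, ρ, hx, hy, rfl⟩ (max_le ?_ ?_)
  · rintro _ ⟨u, r, v, ρ, -, -, rfl⟩
    exact max_sSup_abs_sub_nonneg u r v ρ _
  · exact csSup_le (hne.image _) (forall_mem_image.2 hu)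
  · exact csSup_le (hne.image _) (forall_mem_image.2 hr)

lemma ParamRep.tendsto_dM1 {ι : Type*} {p : Filter ι} {X U R : ι → ℝ → ℝ}
    (hx : ParamRep T x u r) (hX : ∀ᶠ i in p, ParamRep T (X i) (U i) (R i))
    (hU : TendstoUniformlyOn U u p (Icc 0 1)) (hR : TendstoUniformlyOn R r p (Icc 0 1)) :
    Tendsto (fun i => dM1 T (X i) x) p (𝓝 0) := by
  refine tendsto_order.2 ⟨fun b hb => .of_forall fun i => hb.trans_le (dM1_nonneg T (X i) x),
    fun ε hε => ?_⟩
  filter_upwards [hX, Metric.tendstoUniformlyOn_iff.1 hU (ε / 2) (half_pos hε),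
    Metric.tendstoUniformlyOn_iff.1 hR (ε / 2) (half_pos hε)] with i hXi hUi hRi
  refine (hXi.dM1_le hx (fun s hs => ?_) fun s hs => ?_).trans_lt (half_lt_self hε)
  · exact (dist_comm (u s) _ ▸ hUi s hs).le
  · exact (dist_comm (r s) _ ▸ hRi s hs).le

lemma leftLim_congr {E : Type*} [TopologicalSpace E] [T2Space E] {f g : ℝ → E} {t : ℝ}
    (hlt : f =ᶠ[𝓝[<] t] g) (ht : f t = g t) : leftLim f t = leftLim g t := by
  by_cases hf : ∃ c, Tendsto f (𝓝[<] t) (𝓝 c)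
  · exact (leftLim_eq_of_tendsto ((tendsto_leftLim_of_tendsto hf).congr' hlt)).symm
  · have hg : ¬∃ c, Tendsto g (𝓝[<] t) (𝓝 c) := by simpa only [tendsto_congr' hlt] using hf
    rw [leftLim_eq_of_not_tendsto _ hf, leftLim_eq_of_not_tendsto _ hg, ht]

lemma leftVal_congr (hxy : EqOn x y (Icc 0 T)) {t : ℝ} (ht : t ∈ Icc 0 T) :
    leftVal x t = leftVal y t := by
  rcases ht.1.eq_or_lt with rfl | h0
  · simpa [leftVal] using hxy ht
  · have hlt : x =ᶠ[𝓝[<] t] y := by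
      filter_upwards [Ioo_mem_nhdsLT h0] with s hs using hxy ⟨hs.1.le, hs.2.le.trans ht.2⟩
    simp only [leftVal, h0.not_ge, if_false, leftLim_congr hlt (hxy ht)]

lemma compGraph_congr (hxy : EqOn x y (Icc 0 T)) : compGraph T x = compGraph T y := by
  ext p
  refine and_congr_right fun ht => ?_
  rw [leftVal_congr hxy ht, hxy ht]

lemma ParamRep.congr (hx : ParamRep T x u r) (hxy : EqOn x y (Icc 0 T)) : ParamRep T y u r := by
  obtain ⟨hu, hr, hmem, hsurj, hmono⟩ := hx
  refine ⟨hu, hr, compGraph_congr hxy ▸ hmem, compGraph_congr hxy ▸ hsurj,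
    fun s hs s' hs' hss' => ?_⟩
  have hleft : leftVal x (r s) = leftVal y (r s) := leftVal_congr hxy (hmem s hs).1
  simpa only [graphLE, hleft] using hmono s hs s' hs' hss'

lemma dM1_congr (hx : EqOn x x' (Icc 0 T)) (hy : EqOn y y' (Icc 0 T)) :
    dM1 T x y = dM1 T x' y' := by
  have hxiff (u r : ℝ → ℝ) : ParamRep T x u r ↔ ParamRep T x' u r :=
    ⟨fun h => h.congr hx, fun h => h.congr hx.symm⟩
  have hyiff (v ρ : ℝ → ℝ) : ParamRep T y v ρ ↔ ParamRep T y' v ρ :=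
    ⟨fun h => h.congr hy, fun h => h.congr hy.symm⟩
  simp only [dM1, hxiff, hyiff]

end SkorokhodM1

section TrailingAverageM1

variable {f φ : ℝ → ℝ} {T : ℝ}

lemma paramRep_trailingAverage (hφ : Monotone fun t => φ t - t) (hf : LocallyIntegrable f)
    (hT : 0 ≤ T) {h : ℝ} (hh : 0 < h) :
    ParamRep T (trailingAverage h f)
      (trailingAverage h f ∘ genInv (trailingAverage h φ) ∘
        AffineMap.lineMap (trailingAverage h φ 0) (trailingAverage h φ T))
      (genInv (trailingAverage h φ) ∘
        AffineMap.lineMap (trailingAverage h φ 0) (trailingAverage h φ T)) := by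
  have hcf : Continuous (trailingAverage h f) := continuous_trailingAverage hf h
  have hmono := monotone_trailingAverage_sub_id hφ hh
  have hφint : LocallyIntegrable φ :=
    (strictMono_of_monotone_sub_id hφ).monotone.locallyIntegrable
  have hclock : IsJumpClock (trailingAverage h f) (trailingAverage h φ) :=
    isJumpClock_of_continuous hmono (continuous_trailingAverage hφint h) hcf
  have hlift : liftedPath (trailingAverage h f) (trailingAverage h φ) =
      trailingAverage h f ∘ genInv (trailingAverage h φ) :=
    funext (liftedPath_of_continuous hcf _)
  have hrep := hclock.paramRep (hcf.continuousWithinAt.leftLim_eq) hT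
    (hlift ▸ hcf.comp (lipschitzWith_genInv hmono).continuous)
  rwa [hlift] at hrep

lemma tendsto_lineMap_trailingAverage (hφ : LocallyIntegrable φ) {a b : ℝ}
    (ha : ContinuousAt φ a) (hb : ContinuousAt φ b) (s : ℝ) :
    Tendsto (fun q : ℝ × ℝ =>
        (q.1, AffineMap.lineMap (trailingAverage q.1 φ a) (trailingAverage q.1 φ b) q.2))
      (𝓝[>] 0 ×ˢ 𝓝 s) (𝓝[>] 0 ×ˢ 𝓝 (AffineMap.lineMap (φ a) (φ b) s)) := by
  have hwidth : Tendsto Prod.fst (𝓝[>] (0 : ℝ) ×ˢ 𝓝 s) (𝓝[≠] 0) :=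
    tendsto_fst.mono_right (nhdsGT_le_nhdsNE 0)
  exact tendsto_fst.prodMk <|
    (tendsto_trailingAverage hφ ha hwidth tendsto_const_nhds).lineMap
      (tendsto_trailingAverage hφ hb hwidth tendsto_const_nhds) tendsto_snd

theorem IsGlobalCadlag.tendsto_dM1_trailingAverage (hf : IsGlobalCadlag f) (hT : 0 ≤ T)
    (hf0 : leftLim f 0 = f 0) (hfT : leftLim f T = f T) :
    Tendsto (fun h => dM1 T (trailingAverage h f) f) (𝓝[>] 0) (𝓝 0) := by
  obtain ⟨φ, hφ⟩ := hf.exists_isJumpClock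
  have hlevel := tendsto_lineMap_trailingAverage hφ.monotone.locallyIntegrable
    (hφ.isGlobalCadlag.continuousAt ((hφ.leftLim_eq_iff 0).2 hf0))
    (hφ.isGlobalCadlag.continuousAt ((hφ.leftLim_eq_iff T).2 hfT))
  have hspace := hφ.tendsto_trailingAverage_genInv hf hf.locallyIntegrable
  have hcont : Continuous (liftedPath f φ) := continuous_of_tendsto_prod
    (F := fun h => trailingAverage h f ∘ genInv (trailingAverage h φ)) hspace
  refine (hφ.paramRep hf0 hT hcont).tendsto_dM1
    (U := fun h => trailingAverage h f ∘ genInv (trailingAverage h φ) ∘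
      AffineMap.lineMap (trailingAverage h φ 0) (trailingAverage h φ T))
    (R := fun h => genInv (trailingAverage h φ) ∘
      AffineMap.lineMap (trailingAverage h φ 0) (trailingAverage h φ T))
    (eventually_nhdsWithin_of_forall fun h hh => ?_)
    (tendstoUniformlyOn_of_tendsto_prod isCompact_Icc fun s => ?_)
    (tendstoUniformlyOn_of_tendsto_prod isCompact_Icc fun s => ?_)
  · exact paramRep_trailingAverage hφ.monotone_sub_id hf.locallyIntegrable hT hh
  · exact (hspace (AffineMap.lineMap (φ 0) (φ T) s)).comp (hlevel s)
  · have htime := tendsto_genInv_trailingAverage hφ.monotone_sub_id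
      (AffineMap.lineMap (φ 0) (φ T) s)
    simpa only [Function.comp_def] using htime.comp (hlevel s)

end TrailingAverageM1

/-- The extension of `x` from `[0, T]` to `ℝ` by the constants `x 0` and `x T`. -/
def constExtend (T : ℝ) (x : ℝ → ℝ) (s : ℝ) : ℝ := x (max 0 (min s T))

section ConstExtend

variable {T : ℝ} {x : ℝ → ℝ}

lemma constExtend_of_nonpos (hT : 0 ≤ T) {s : ℝ} (hs : s ≤ 0) : constExtend T x s = x 0 := by
  rw [constExtend, min_eq_left (hs.trans hT), max_eq_left hs]

lemma constExtend_of_ge (hT : 0 ≤ T) {s : ℝ} (hs : T ≤ s) : constExtend T x s = x T := by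
  rw [constExtend, min_eq_right hs, max_eq_right hT]

lemma constExtend_of_mem_Icc {s : ℝ} (hs : s ∈ Icc 0 T) : constExtend T x s = x s := by
  rw [constExtend, min_eq_left hs.2, max_eq_right hs.1]

lemma eqOn_constExtend (hT : 0 ≤ T) (hx : ∀ s < 0, x s = x 0) :
    EqOn x (constExtend T x) (Iic T) := by
  intro s hs
  rcases lt_or_ge s 0 with h0 | h0
  · rw [hx s h0, constExtend_of_nonpos hT h0.le]
  · exact (constExtend_of_mem_Icc ⟨h0, hs⟩).symm

lemma tendsto_constExtend_left_of_nonpos (hT : 0 ≤ T) {t : ℝ} (ht : t ≤ 0) :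
    Tendsto (constExtend T x) (𝓝[<] t) (𝓝 (x 0)) := by
  refine tendsto_const_nhds.congr' ?_
  filter_upwards [self_mem_nhdsWithin] with s hs
    using (constExtend_of_nonpos hT ((le_of_lt hs).trans ht)).symm

lemma tendsto_constExtend_left {t c : ℝ} (ht : t ∈ Ioc 0 T) (hc : Tendsto x (𝓝[<] t) (𝓝 c)) :
    Tendsto (constExtend T x) (𝓝[<] t) (𝓝 c) := by
  refine hc.congr' ?_
  filter_upwards [Ioo_mem_nhdsLT ht.1] with s hs
    using (constExtend_of_mem_Icc ⟨hs.1.le, hs.2.le.trans ht.2⟩).symm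

lemma Cadlag.isGlobalCadlag_constExtend (hx : Cadlag T x) (hT : 0 < T) :
    IsGlobalCadlag (constExtend T x) := by
  refine ⟨fun t => ?_, fun t => ?_⟩
  · rcases lt_or_ge t T with ht | ht
    · have hmem : max 0 (min t T) ∈ Ico 0 T := ⟨le_max_left _ _, max_lt hT (min_lt_of_left_lt ht)⟩
      have hclamp : ContinuousWithinAt (fun s => max 0 (min s T)) (Ici t) t := by fun_prop
      have hmaps : MapsTo (fun s => max 0 (min s T)) (Ici t) (Ici (max 0 (min t T))) :=
        fun s (hs : t ≤ s) => mem_Ici.2 (max_le_max le_rfl (min_le_min hs le_rfl))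
      exact ContinuousWithinAt.comp (hx.1 _ hmem) hclamp hmaps
    · exact continuousWithinAt_const.congr (fun s hs => constExtend_of_ge hT.le (ht.trans hs))
        (constExtend_of_ge hT.le ht)
  · rcases le_or_gt t 0 with h0 | h0
    · exact ⟨x 0, tendsto_constExtend_left_of_nonpos hT.le h0⟩
    rcases le_or_gt t T with ht | ht
    · exact (hx.2 t ⟨h0, ht⟩).imp fun c => tendsto_constExtend_left ⟨h0, ht⟩
    · refine ⟨x T, tendsto_const_nhds.congr' ?_⟩
      filter_upwards [Ioo_mem_nhdsLT ht] with s hs using (constExtend_of_ge hT.le hs.1.le).symm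

lemma leftLim_constExtend_zero (hT : 0 ≤ T) :
    leftLim (constExtend T x) 0 = constExtend T x 0 := by
  rw [leftLim_eq_of_tendsto (tendsto_constExtend_left_of_nonpos hT le_rfl),
    constExtend_of_nonpos hT le_rfl]

lemma leftLim_constExtend_right (hT : 0 < T) (hxT : Tendsto x (𝓝[<] T) (𝓝 (x T))) :
    leftLim (constExtend T x) T = constExtend T x T := by
  rw [leftLim_eq_of_tendsto (tendsto_constExtend_left ⟨hT, le_rfl⟩ hxT),
    constExtend_of_ge hT.le le_rfl]

end ConstExtend

/-- the Wong–Zakai averaging approximations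
`xₙ(t) = n ∫_{t−1/n}^t x(s) ds` of a càdlàg path `x` on `[0,T]` (continuous at `T`,
extended by `x(s) := x(0)` for `s < 0`) are continuous and converge to `x` in the
Skorokhod M1 topology; in particular every càdlàg path is an M1-limit of absolutely
continuous paths. -/
theorem wong_zakai_M1_convergence
    (T : ℝ) (hT : 0 < T) (x : ℝ → ℝ)
    (hx : Cadlag T x)
    (hxT : Filter.Tendsto x (nhdsWithin T (Set.Iio T)) (nhds (x T)))
    (hext : ∀ s < (0:ℝ), x s = x 0) :
    (∀ n : ℕ, 1 ≤ n →
      ContinuousOn (fun t => (n:ℝ) * ∫ s in (t - 1/(n:ℝ))..t, x s) (Set.Icc 0 T)) ∧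
    Filter.Tendsto
      (fun n : ℕ => dM1 T (fun t => (n:ℝ) * ∫ s in (t - 1/(n:ℝ))..t, x s) x)
      Filter.atTop (nhds 0) := by
  set y := constExtend T x
  have hy : IsGlobalCadlag y := hx.isGlobalCadlag_constExtend hT
  have hxy : EqOn x y (Iic T) := eqOn_constExtend hT.le hext
  have havg (n : ℕ) : EqOn (fun t => (n : ℝ) * ∫ s in (t - 1 / (n : ℝ))..t, x s)
      (trailingAverage (1 / (n : ℝ)) y) (Icc 0 T) := by
    intro t ht
    rw [← trailingAverage_congr hxy (by positivity) ht.2, trailingAverage, one_div, inv_inv,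
      smul_eq_mul]
  have hcont (h : ℝ) : Continuous (trailingAverage h y) :=
    continuous_trailingAverage hy.locallyIntegrable h
  refine ⟨fun n _ => (hcont _).continuousOn.congr (havg n), ?_⟩
  have hwidth : Tendsto (fun n : ℕ => 1 / (n : ℝ)) atTop (𝓝[>] 0) := by
    simp only [one_div]
    exact tendsto_inv_atTop_nhdsGT_zero.comp tendsto_natCast_atTop_atTop
  have hlim := (hy.tendsto_dM1_trailingAverage hT.le (leftLim_constExtend_zero hT.le)
    (leftLim_constExtend_right hT hxT)).comp hwidth
  exact hlim.congr fun n => dM1_congr (havg n).symm (hxy.mono Icc_subset_Iic_self).symm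
end
end

section
/- Fix constants β > 0, σ̂ > 0 and 0 < λ_min ≤ λ_max. Let f : ℝ → ℝ be twice continuously differentiable with f > 0 and f' > 0, such that λ_min ≤ f'(y)/f(y) ≤ λ_max for all y ∈ ℝ and the derivative of y ↦ f'(y)/f(y) is bounded on ℝ. Define ψ(y) := −β·y·f(y) + (σ̂²/2)·f'(y). Then ψ(y) → 0 as y → −∞ and ψ(y) → −∞ as y → +∞; moreover ψ(y) > 0 for every y < 0, and ψ is bounded above on ℝ. -/
open Filter Set Topology

noncomputable section

/-!
Integrating `f' ≥ λ_min f` makes `f` decay at least exponentially at `−∞` and grow at least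
exponentially at `+∞`. Inserting `f' ≤ λ_max f` into the drift bounds it above by
`(c − β y) f y` with `c = σ²/2 · λ_max`. This majorant is continuous although `f'` need not be;
exponential beats linear at `−∞`, and both factors diverge at `+∞`. Since `ψ` is positive on the
negative half-line, the majorant controls everything else.
-/

theorem bddAbove_range_of_isBoundedUnder_cocompact {X α : Type*} [TopologicalSpace X]
    [LinearOrder α] [TopologicalSpace α] [ClosedIciTopology α] [Nonempty α] {φ : X → α}
    (hφ : Continuous φ) (hbdd : (cocompact X).IsBoundedUnder (· ≤ ·) φ) : BddAbove (range φ) := by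
  obtain ⟨b, hb⟩ := hbdd
  obtain ⟨K, hK, hKb⟩ := mem_cocompact.1 (eventually_map.1 hb)
  have hcompl : BddAbove (φ '' Kᶜ) := ⟨b, forall_mem_image.2 fun _ hx => hKb hx⟩
  rw [← image_univ, ← union_compl_self K, image_union]
  exact (hK.bddAbove_image hφ.continuousOn).union hcompl

section ExponentialGrowth

variable {f : ℝ → ℝ} {a : ℝ}

theorem monotone_exp_neg_mul_of_mul_le_deriv (hf : Differentiable ℝ f)
    (hderiv : ∀ x, a * f x ≤ deriv f x) : Monotone fun x => Real.exp (-(a * x)) * f x := by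
  have hasDeriv (x : ℝ) : HasDerivAt (fun x => Real.exp (-(a * x)) * f x)
      (Real.exp (-(a * x)) * (deriv f x - a * f x)) x := by
    have hexp : HasDerivAt (fun x => Real.exp (-(a * x))) (Real.exp (-(a * x)) * -a) x :=
      (hasDerivAt_const_mul a).neg.exp
    exact (hexp.mul (hf x).hasDerivAt).congr_deriv (by ring)
  refine monotone_of_hasDerivAt_nonneg hasDeriv fun x => ?_
  exact mul_nonneg (Real.exp_pos _).le (sub_nonneg.2 (hderiv x))

theorem exp_mul_sub_mul_le_of_mul_le_deriv (hf : Differentiable ℝ f)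
    (hderiv : ∀ x, a * f x ≤ deriv f x) {x y : ℝ} (hxy : x ≤ y) :
    Real.exp (a * (y - x)) * f x ≤ f y := by
  have hmono := monotone_exp_neg_mul_of_mul_le_deriv hf hderiv hxy
  calc Real.exp (a * (y - x)) * f x
      = Real.exp (a * y) * (Real.exp (-(a * x)) * f x) := by
        rw [← mul_assoc, ← Real.exp_add]; ring_nf
    _ ≤ Real.exp (a * y) * (Real.exp (-(a * y)) * f y) := by gcongr
    _ = f y := by rw [← mul_assoc, ← Real.exp_add, add_neg_cancel, Real.exp_zero, one_mul]

theorem tendsto_atTop_of_mul_le_deriv (ha : 0 < a) (hf : Differentiable ℝ f)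
    (hderiv : ∀ x, a * f x ≤ deriv f x) {x₀ : ℝ} (hx₀ : 0 < f x₀) : Tendsto f atTop atTop := by
  have hexp : Tendsto (fun x => Real.exp (a * (x - x₀)) * f x₀) atTop atTop :=
    (Real.tendsto_exp_atTop.comp
      ((tendsto_atTop_add_const_right _ (-x₀) tendsto_id).const_mul_atTop ha)).atTop_mul_const hx₀
  refine tendsto_atTop_mono' _ ?_ hexp
  filter_upwards [eventually_ge_atTop x₀] with x hx
  exact exp_mul_sub_mul_le_of_mul_le_deriv hf hderiv hx

theorem tendsto_pow_mul_exp_mul_atBot_nhds_zero (n : ℕ) (ha : 0 < a) :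
    Tendsto (fun x => x ^ n * Real.exp (a * x)) atBot (𝓝 0) := by
  have h := ((isLittleO_pow_exp_pos_mul_atTop n ha).tendsto_div_nhds_zero.comp
    tendsto_neg_atBot_atTop).const_mul ((-1) ^ n)
  rw [mul_zero] at h
  refine h.congr fun x => ?_
  rw [Function.comp_apply, div_eq_mul_inv, ← Real.exp_neg, ← mul_assoc, ← mul_pow]
  ring_nf

theorem tendsto_pow_mul_atBot_nhds_zero_of_mul_le_deriv (n : ℕ) (ha : 0 < a)
    (hf : Differentiable ℝ f) (hnonneg : ∀ x, 0 ≤ f x) (hderiv : ∀ x, a * f x ≤ deriv f x) :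
    Tendsto (fun x => x ^ n * f x) atBot (𝓝 0) := by
  have hdecay (x : ℝ) (hx : x ≤ 0) : f x ≤ Real.exp (a * x) * f 0 := by
    have h := exp_mul_sub_mul_le_of_mul_le_deriv hf hderiv hx
    rw [zero_sub, mul_neg, Real.exp_neg] at h
    exact (inv_mul_le_iff₀ (Real.exp_pos _)).1 h
  have hlim := (tendsto_pow_mul_exp_mul_atBot_nhds_zero n ha).norm.mul_const (f 0)
  rw [norm_zero, zero_mul] at hlim
  refine squeeze_zero_norm' ?_ hlim
  filter_upwards [eventually_le_atBot 0] with x hx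
  calc ‖x ^ n * f x‖ = ‖x ^ n‖ * f x := by rw [norm_mul, Real.norm_of_nonneg (hnonneg x)]
    _ ≤ ‖x ^ n‖ * (Real.exp (a * x) * f 0) := by gcongr; exact hdecay x hx
    _ = ‖x ^ n * Real.exp (a * x)‖ * f 0 := by
        rw [norm_mul, Real.norm_of_nonneg (Real.exp_pos _).le, mul_assoc]

theorem tendsto_affine_mul_atBot_nhds_zero_of_mul_le_deriv (β c : ℝ) (ha : 0 < a)
    (hf : Differentiable ℝ f) (hnonneg : ∀ x, 0 ≤ f x) (hderiv : ∀ x, a * f x ≤ deriv f x) :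
    Tendsto (fun x => (c - β * x) * f x) atBot (𝓝 0) := by
  have hpow (n : ℕ) := tendsto_pow_mul_atBot_nhds_zero_of_mul_le_deriv n ha hf hnonneg hderiv
  have h := ((hpow 0).const_mul c).sub ((hpow 1).const_mul β)
  rw [mul_zero, mul_zero, sub_zero] at h
  exact h.congr fun x => by ring

theorem tendsto_affine_mul_atTop_atBot_of_mul_le_deriv {β : ℝ} (hβ : 0 < β) (c : ℝ) (ha : 0 < a)
    (hf : Differentiable ℝ f) (hderiv : ∀ x, a * f x ≤ deriv f x) {x₀ : ℝ} (hx₀ : 0 < f x₀) :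
    Tendsto (fun x => (c - β * x) * f x) atTop atBot := by
  have haffine : Tendsto (fun x => c - β * x) atTop atBot :=
    tendsto_atBot_add_const_left _ c
      (tendsto_neg_atTop_atBot.comp (tendsto_id.const_mul_atTop hβ))
  exact haffine.atBot_mul_atTop₀ (tendsto_atTop_of_mul_le_deriv ha hf hderiv hx₀)

theorem bddAbove_range_affine_mul_of_mul_le_deriv {β : ℝ} (hβ : 0 < β) (c : ℝ) (ha : 0 < a)
    (hf : Differentiable ℝ f) (hpos : ∀ x, 0 < f x) (hderiv : ∀ x, a * f x ≤ deriv f x) :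
    BddAbove (range fun x => (c - β * x) * f x) := by
  have hbot := tendsto_affine_mul_atBot_nhds_zero_of_mul_le_deriv β c ha hf
    (fun x => (hpos x).le) hderiv
  have htop := tendsto_affine_mul_atTop_atBot_of_mul_le_deriv hβ c ha hf hderiv (hpos 0)
  have hcont := hf.continuous
  refine bddAbove_range_of_isBoundedUnder_cocompact (by fun_prop) ?_
  rw [cocompact_eq_atBot_atTop, IsBoundedUnder, map_sup]
  exact isBounded_sup hbot.isBoundedUnder_le htop.isBoundedUnder_le_atBot

end ExponentialGrowth

theorem psi_asymptotics_general {β σ lmin lmax : ℝ} (hβ : 0 < β) (hlmin : 0 < lmin)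
    {f : ℝ → ℝ} (hf : Differentiable ℝ f) (hfpos : ∀ y, 0 < f y)
    (hlam : ∀ y, lmin ≤ deriv f y / f y ∧ deriv f y / f y ≤ lmax)
    {ψ : ℝ → ℝ} (hψ : ∀ y, ψ y = -β * y * f y + σ ^ 2 / 2 * deriv f y) :
    Tendsto ψ atBot (𝓝 0) ∧ Tendsto ψ atTop atBot ∧
      (∀ y < (0 : ℝ), 0 < ψ y) ∧ ∃ C : ℝ, ∀ y : ℝ, ψ y ≤ C := by
  have hlower (y : ℝ) : lmin * f y ≤ deriv f y := (le_div_iff₀ (hfpos y)).1 (hlam y).1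
  have hupper (y : ℝ) : deriv f y ≤ lmax * f y := (div_le_iff₀ (hfpos y)).1 (hlam y).2
  have hψ_le (y : ℝ) : ψ y ≤ (σ ^ 2 / 2 * lmax - β * y) * f y := by
    have hdiffusion : σ ^ 2 / 2 * deriv f y ≤ σ ^ 2 / 2 * (lmax * f y) := by
      gcongr; exact hupper y
    rw [hψ]
    linarith
  have hψ_pos (y : ℝ) (hy : y < 0) : 0 < ψ y := by
    have hderiv_pos : 0 < deriv f y := (mul_pos hlmin (hfpos y)).trans_le (hlower y)
    have hresilience : 0 < -β * y * f y :=
      mul_pos (mul_pos_of_neg_of_neg (neg_neg_of_pos hβ) hy) (hfpos y)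
    rw [hψ]
    positivity
  refine ⟨squeeze_zero' ?_ (.of_forall hψ_le) ?_, tendsto_atBot_mono hψ_le ?_, hψ_pos, ?_⟩
  · filter_upwards [eventually_lt_atBot 0] with y hy using (hψ_pos y hy).le
  · exact tendsto_affine_mul_atBot_nhds_zero_of_mul_le_deriv β _ hlmin hf
      (fun y => (hfpos y).le) hlower
  · exact tendsto_affine_mul_atTop_atBot_of_mul_le_deriv hβ _ hlmin hf hlower (hfpos 0)
  · obtain ⟨C, hC⟩ := bddAbove_range_affine_mul_of_mul_le_deriv hβ _ hlmin hf hfpos hlower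
    exact ⟨C, fun y => (hψ_le y).trans (hC (mem_range_self y))⟩

/-- asymptotics of `ψ(y) = −β·y·f(y) + (σ̂²/2)·f'(y)`:
`ψ(y) → 0` as `y → −∞`, `ψ(y) → −∞` as `y → +∞`, `ψ(y) > 0` for every `y < 0`,
and `ψ` is bounded above on `ℝ`. -/
theorem psi_asymptotics
    (β σ lmin lmax : ℝ) (hβ : 0 < β) (hσ : 0 < σ)
    (hlmin : 0 < lmin) (hll : lmin ≤ lmax)
    (f : ℝ → ℝ) (hf : ContDiff ℝ 2 f)
    (hfpos : ∀ y, 0 < f y) (hf' : ∀ y, 0 < deriv f y)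
    (hlam : ∀ y, lmin ≤ deriv f y / f y ∧ deriv f y / f y ≤ lmax)
    (hlam' : ∃ C : ℝ, ∀ y, |deriv (fun z => deriv f z / f z) y| ≤ C)
    (ψ : ℝ → ℝ)
    (hψ : ∀ y, ψ y = -β * y * f y + σ ^ 2 / 2 * deriv f y) :
    Filter.Tendsto ψ Filter.atBot (nhds 0) ∧
    Filter.Tendsto ψ Filter.atTop Filter.atBot ∧
    (∀ y < (0:ℝ), 0 < ψ y) ∧
    (∃ C : ℝ, ∀ y : ℝ, ψ y ≤ C) :=
  psi_asymptotics_general hβ hlmin (hf.differentiable two_ne_zero) hfpos hlam hψ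
end
end
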